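/- arXiv:2304.00911 — 5 statements merged into one kernel-verified Lean document; each statement's English description precedes it below -/
import Mathlib

section
/- Let M be a para-Sasaki-like Riemannian manifold with generalized symmetric metric connection ∇̄. Then for all vector fields x,y: (∇̄_x φ)y = (β−1){g(φx,φy)ξ + η(y)φ²x} + α{g(x,φy)ξ + η(y)φx}, ∇̄_x ξ = (1−β)φx − αφ²x, and (∇̄_x η)y = (1−β)g(φx,y) − α g(x,y) + α η(x)η(y). -/
/-- Abstract algebraic model of an almost paracontact almost paracomplex
Riemannian (apapR) manifold of dimension `2 n + 1`.  Here `R` plays the role of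
the commutative ring of smooth functions `C^∞(M)` and `V` the `R`-module of
vector fields.  `act x f` is the derivative `x(f)` of a function along a vector
field, `bracket` is the Lie bracket, `g` the Riemannian metric, `(phi, xi, eta)`
the almost paracontact almost paracomplex structure, `nab` the Levi-Civita
connection of `g` and `e` a (local) orthonormal frame with `e 0 = xi`. -/
structure ApapR (R V : Type*) [CommRing R] [Algebra ℝ R]
    [AddCommGroup V] [Module R V] where
  n : ℕ
  act : V → R → R
  bracket : V → V → V
  g : V → V → R
  phi : V → V
  xi : V
  eta : V → R
  nab : V → V → V
  e : Fin (2 * n + 1) → V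
  act_addl : ∀ x y f, act (x + y) f = act x f + act y f
  act_smull : ∀ (h : R) (x : V) f, act (h • x) f = h * act x f
  act_addr : ∀ x f h, act x (f + h) = act x f + act x h
  act_mul : ∀ x f h, act x (f * h) = f * act x h + h * act x f
  g_symm : ∀ x y, g x y = g y x
  g_addl : ∀ x y z, g (x + y) z = g x z + g y z
  g_smull : ∀ (f : R) x y, g (f • x) y = f * g x y
  phi_add : ∀ x y, phi (x + y) = phi x + phi y
  phi_smul : ∀ (f : R) x, phi (f • x) = f • phi x
  eta_eq : ∀ x, eta x = g x xi
  -- apapR structure axioms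
  eta_xi : eta xi = 1
  phi_phi : ∀ x, phi (phi x) = x - eta x • xi
  phi_xi : phi xi = 0
  g_phi_phi : ∀ x y, g (phi x) (phi y) = g x y - eta x * eta y
  -- orthonormal frame, `tr φ = 0`
  e_zero : e 0 = xi
  e_orthonormal : ∀ i j, g (e i) (e j) = if i = j then 1 else 0
  trace_phi : (∑ i, g (phi (e i)) (e i)) = 0
  -- Levi-Civita connection axioms
  nab_addl : ∀ x y z, nab (x + y) z = nab x z + nab y z
  nab_smull : ∀ (f : R) x y, nab (f • x) y = f • nab x y
  nab_addr : ∀ x y z, nab x (y + z) = nab x y + nab x z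
  nab_leibniz : ∀ x (f : R) y, nab x (f • y) = f • nab x y + act x f • y
  nab_metric : ∀ x y z, act x (g y z) = g (nab x y) z + g y (nab x z)
  nab_torsion : ∀ x y, nab x y - nab y x = bracket x y

namespace ApapR

variable {R V : Type*} [CommRing R] [Algebra ℝ R] [AddCommGroup V] [Module R V]

/-- The para-Sasaki-like condition `(∇_x φ)y = −g(x,y)ξ − η(y)x + 2η(x)η(y)ξ`. -/
def IsParaSasakiLike (S : ApapR R V) : Prop :=
  ∀ x y, S.nab x (S.phi y) - S.phi (S.nab x y)
    = -(S.g x y • S.xi) - S.eta y • x + (2 * S.eta x * S.eta y) • S.xi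

/-- The generalized symmetric metric connection
`∇̄_x y = ∇_x y + α{g(x,y)ξ − η(y)x} + β{g(φx,y)ξ − η(y)φx}`. -/
def gsmc (S : ApapR R V) (α β : R) (x y : V) : V :=
  S.nab x y + (α * S.g x y) • S.xi - (α * S.eta y) • x
    + (β * S.g (S.phi x) y) • S.xi - (β * S.eta y) • S.phi x

/-- Curvature tensor of a connection `D`:
`R_D(x,y)z = D_x D_y z − D_y D_x z − D_[x,y] z`. -/
def curv (S : ApapR R V) (D : V → V → V) (x y z : V) : V :=
  D x (D y z) - D y (D x z) - D (S.bracket x y) z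

/-- Ricci tensor of a connection `D` with respect to the orthonormal frame. -/
def ric (S : ApapR R V) (D : V → V → V) (x y : V) : R :=
  ∑ i, S.g (S.curv D (S.e i) x y) (S.e i)

/-- Scalar curvature of a connection `D`. -/
def scal (S : ApapR R V) (D : V → V → V) : R :=
  ∑ i, S.ric D (S.e i) (S.e i)

/-- Divergence of a vector field with respect to a connection `D`. -/
def divg (S : ApapR R V) (D : V → V → V) (x : V) : R :=
  ∑ i, S.g (D (S.e i) x) (S.e i)

/-- The associated metric `g̃(x,y) = g(x,φy) + η(x)η(y)`. -/
def tg (S : ApapR R V) (x y : V) : R := S.g x (S.phi y) + S.eta x * S.eta y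

/-- A function is constant iff all its derivatives vanish. -/
def IsConstant (S : ApapR R V) (f : R) : Prop := ∀ x, S.act x f = 0

end ApapR

namespace ApapR

variable {R V : Type*} [CommRing R] [Algebra ℝ R] [AddCommGroup V] [Module R V]

theorem aux_eta_add (S : ApapR R V) (x y : V) : S.eta (x + y) = S.eta x + S.eta y := by
  simp only [S.eta_eq, S.g_addl]

theorem aux_eta_smul (S : ApapR R V) (f : R) (x : V) : S.eta (f • x) = f * S.eta x := by
  simp only [S.eta_eq, S.g_smull]

theorem aux_eta_neg (S : ApapR R V) (x : V) : S.eta (-x) = - S.eta x := by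
  rw [← neg_one_smul R x, aux_eta_smul]; ring

theorem aux_phi_neg (S : ApapR R V) (x : V) : S.phi (-x) = - S.phi x := by
  rw [← neg_one_smul R x, S.phi_smul]; module

theorem aux_eta_sub (S : ApapR R V) (x y : V) : S.eta (x - y) = S.eta x - S.eta y := by
  rw [sub_eq_add_neg, aux_eta_add, aux_eta_neg]; ring

theorem aux_phi_sub (S : ApapR R V) (x y : V) : S.phi (x - y) = S.phi x - S.phi y := by
  rw [sub_eq_add_neg, S.phi_add, aux_phi_neg]; abel

theorem aux_phi3 (S : ApapR R V) (x : V) : S.phi (S.phi (S.phi x)) = S.phi x := by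
  rw [S.phi_phi x, aux_phi_sub, S.phi_smul, S.phi_xi]; simp

theorem aux_eta_phi (S : ApapR R V) (x : V) : S.eta (S.phi x) = 0 := by
  have h := S.phi_phi (S.phi x)
  rw [aux_phi3] at h
  have h2 : S.eta (S.phi x) • S.xi = 0 := by
    have := sub_eq_self.mp h.symm
    exact this
  have h3 := congrArg S.eta h2
  have h0 : S.eta (0 : V) = 0 := by
    have := aux_eta_smul S 0 (0 : V)
    simpa using this
  rw [aux_eta_smul, S.eta_xi, h0, mul_one] at h3
  exact h3

theorem aux_eta_nab_xi (S : ApapR R V) (x : V) : S.eta (S.nab x S.xi) = 0 := by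
  have h := S.nab_metric x S.xi S.xi
  have h1 : S.act x 1 = 0 := by
    have := S.act_mul x 1 1
    simp only [mul_one, one_mul] at this
    exact left_eq_add.mp this
  rw [← S.eta_eq, S.eta_xi, h1, S.g_symm S.xi, ← S.eta_eq] at h
  have h2 : (2 : ℝ) • S.eta (S.nab x S.xi) = 0 := by rw [two_smul]; exact h.symm
  have h3 := congrArg (fun r : R => (2⁻¹ : ℝ) • r) h2
  simpa [smul_smul] using h3

theorem aux_nab_xi (S : ApapR R V) (hS : S.IsParaSasakiLike) (x : V) :
    S.nab x S.xi = S.phi x := by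
  have h := hS x S.xi
  have h0 : S.nab x 0 = 0 := by
    have := S.nab_addr x 0 0
    rw [add_zero] at this
    exact left_eq_add.mp this
  have hp : S.phi (S.nab x S.xi) = S.phi (S.phi x) := by
    rw [S.phi_xi, h0, S.eta_xi, ← S.eta_eq, zero_sub] at h
    rw [S.phi_phi, ← neg_neg (S.phi (S.nab x S.xi)), h]
    module
  have h2 := congrArg S.phi hp
  rw [aux_phi3, S.phi_phi, aux_eta_nab_xi] at h2
  simpa using h2

/-- basic formulas for `∇̄φ`, `∇̄ξ` and `∇̄η` on a para-Sasaki-like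
manifold with the generalized symmetric metric connection. -/
theorem gsmc_phi_xi_eta (S : ApapR R V) (hS : S.IsParaSasakiLike) (α β : R) :
    (∀ x y, S.gsmc α β x (S.phi y) - S.phi (S.gsmc α β x y)
        = ((β - 1) * S.g (S.phi x) (S.phi y)) • S.xi
            + ((β - 1) * S.eta y) • S.phi (S.phi x)
            + (α * S.g x (S.phi y)) • S.xi + (α * S.eta y) • S.phi x) ∧
    (∀ x, S.gsmc α β x S.xi = (1 - β) • S.phi x - α • S.phi (S.phi x)) ∧
    (∀ x y, S.act x (S.eta y) - S.eta (S.gsmc α β x y)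
        = (1 - β) * S.g (S.phi x) y - α * S.g x y + α * S.eta x * S.eta y) := by
  refine ⟨fun x y => ?_, fun x => ?_, fun x y => ?_⟩
  · have h := hS x y
    have h' := sub_eq_iff_eq_add.mp h
    simp only [gsmc, S.phi_add, aux_phi_sub, S.phi_smul, S.phi_xi, aux_eta_phi, h',
      S.phi_phi x, S.g_phi_phi]
    module
  · simp only [gsmc, aux_nab_xi S hS, ← S.eta_eq, aux_eta_phi, S.eta_xi, S.phi_phi]
    module
  · have h := S.nab_metric x y S.xi
    rw [← S.eta_eq, ← S.eta_eq, aux_nab_xi S hS, S.g_symm y] at h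
    simp only [gsmc, aux_eta_add, aux_eta_sub, aux_eta_smul, S.eta_xi, aux_eta_phi, h]
    ring

end ApapR
end

section
/- Let (M,g,φ,ξ,η) be a (2n+1)-dimensional para-Sasaki-like Riemannian manifold with generalized symmetric metric connection ∇̄ (with smooth functions α, β). Then the curvature tensors R̄ of ∇̄ and R of the Levi-Civita connection ∇ satisfy: R̄(x,y)z = R(x,y)z + x(α)g(y,z)ξ + (α−αβ)g(y,z)φx − x(α)η(z)y + x(β)g(φy,z)ξ + (2β−β²)g(φy,z)φx − x(β)η(z)φy + (α²+β)g(y,z)η(x)ξ + αβ g(φy,z)η(x)ξ − α²g(y,z)x + (α²+β)η(y)η(z)x + (α−αβ)g(φy,z)x + αβ η(y)η(z)φx − y(α)g(x,z)ξ + y(α)η(z)x − y(β)g(φx,z)ξ + (β²−2β)g(φx,z)φy + y(β)η(z)φx − (α²+β)η(y)g(x,z)ξ − αβ g(φx,z)η(y)ξ + α² g(x,z)y − (α²+β)η(x)η(z)y + (αβ−α)g(φx,z)y − αβ η(x)η(z)φy + (αβ−α)g(x,z)φy. -/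
namespace ApapR

variable {R V : Type*} [CommRing R] [Algebra ℝ R] [AddCommGroup V] [Module R V]

theorem aux_act_one (S : ApapR R V) (x : V) : S.act x 1 = 0 := by
  have h := S.act_mul x 1 1
  simp only [mul_one, one_mul] at h
  linear_combination -h

theorem aux_g_addr (S : ApapR R V) (x y z : V) : S.g x (y + z) = S.g x y + S.g x z := by
  rw [S.g_symm, S.g_addl, S.g_symm y, S.g_symm z]

theorem aux_g_smulr (S : ApapR R V) (f : R) (x y : V) : S.g x (f • y) = f * S.g x y := by
  rw [S.g_symm, S.g_smull, S.g_symm y]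

theorem aux_g_negl (S : ApapR R V) (x y : V) : S.g (-x) y = - S.g x y := by
  rw [← neg_one_smul R x, S.g_smull]; ring

theorem aux_g_negr (S : ApapR R V) (x y : V) : S.g x (-y) = - S.g x y := by
  rw [S.g_symm, aux_g_negl, S.g_symm]

theorem aux_nab_negl (S : ApapR R V) (x y : V) : S.nab (-x) y = - S.nab x y := by
  rw [← neg_one_smul R x, S.nab_smull]; module

theorem aux_nab_zeror (S : ApapR R V) (x : V) : S.nab x 0 = 0 := by
  have h := S.nab_addr x 0 0
  simpa using h

theorem aux_nab_negr (S : ApapR R V) (x y : V) : S.nab x (-y) = - S.nab x y := by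
  have h := S.nab_addr x y (-y)
  rw [add_neg_cancel, aux_nab_zeror] at h
  exact (neg_eq_of_add_eq_zero_right h.symm).symm

theorem aux_g_phi (S : ApapR R V) (x y : V) : S.g x (S.phi y) = S.g (S.phi x) y := by
  have h := S.g_phi_phi x (S.phi y)
  rw [S.phi_phi, aux_eta_phi, sub_eq_add_neg, aux_g_addr, aux_g_negr, aux_g_smulr,
    ← S.eta_eq, aux_eta_phi] at h
  linear_combination -h

theorem aux_nab_phi (S : ApapR R V) (hS : S.IsParaSasakiLike) (x y : V) :
    S.nab x (S.phi y) = S.phi (S.nab x y)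
      + (-(S.g x y • S.xi) + -(S.eta y • x) + (2 * S.eta x * S.eta y) • S.xi) := by
  have h := hS x y
  rw [← sub_eq_add_neg, ← h]; abel

theorem aux_act_eta (S : ApapR R V) (hS : S.IsParaSasakiLike) (x y : V) :
    S.act x (S.eta y) = S.eta (S.nab x y) + S.g (S.phi x) y := by
  rw [S.eta_eq, S.nab_metric, aux_nab_xi S hS, S.g_symm y, ← S.eta_eq]

/-- the relation between the curvature tensor of the generalized
symmetric metric connection and that of the Levi-Civita connection on a
para-Sasaki-like manifold, for smooth functions `α`, `β`. -/
theorem curv_gsmc_eq (S : ApapR R V) (hS : S.IsParaSasakiLike) (α β : R)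
    (x y z : V) :
    S.curv (S.gsmc α β) x y z
      = S.curv S.nab x y z
        + (S.act x α * S.g y z) • S.xi
        + ((α - α * β) * S.g y z) • S.phi x
        - (S.act x α * S.eta z) • y
        + (S.act x β * S.g (S.phi y) z) • S.xi
        + ((2 * β - β ^ 2) * S.g (S.phi y) z) • S.phi x
        - (S.act x β * S.eta z) • S.phi y
        + ((α ^ 2 + β) * S.g y z * S.eta x) • S.xi
        + (α * β * S.g (S.phi y) z * S.eta x) • S.xi
        - (α ^ 2 * S.g y z) • x
        + ((α ^ 2 + β) * S.eta y * S.eta z) • x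
        + ((α - α * β) * S.g (S.phi y) z) • x
        + (α * β * S.eta y * S.eta z) • S.phi x
        - (S.act y α * S.g x z) • S.xi
        + (S.act y α * S.eta z) • x
        - (S.act y β * S.g (S.phi x) z) • S.xi
        + ((β ^ 2 - 2 * β) * S.g (S.phi x) z) • S.phi y
        + (S.act y β * S.eta z) • S.phi x
        - ((α ^ 2 + β) * S.eta y * S.g x z) • S.xi
        - (α * β * S.g (S.phi x) z * S.eta y) • S.xi
        + (α ^ 2 * S.g x z) • y
        - ((α ^ 2 + β) * S.eta x * S.eta z) • y
        + ((α * β - α) * S.g (S.phi x) z) • y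
        - (α * β * S.eta x * S.eta z) • S.phi y
        + ((α * β - α) * S.g x z) • S.phi y := by
  have s1 : S.g y x = S.g x y := S.g_symm y x
  have s2 : S.g (S.phi y) x = S.g (S.phi x) y := by rw [S.g_symm, aux_g_phi]
  have gx : ∀ u, S.g S.xi u = S.eta u := fun u => by rw [S.g_symm, S.eta_eq]
  have gx' : ∀ u, S.g u S.xi = S.eta u := fun u => (S.eta_eq u).symm
  have hpp : ∀ u v, S.g (S.phi (S.phi u)) v = S.g u v - S.eta u * S.eta v := fun u v => by
    rw [← aux_g_phi, S.g_phi_phi]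
  simp only [curv, gsmc, ← S.nab_torsion, sub_eq_add_neg, S.nab_addl, S.nab_addr, aux_nab_negl,
    aux_nab_negr, S.nab_leibniz, S.act_mul, S.nab_metric, aux_act_eta S hS, aux_nab_xi S hS,
    aux_nab_phi S hS, S.g_addl, aux_g_addr, aux_g_negl, aux_g_negr, S.g_smull, aux_g_smulr,
    gx, gx', aux_g_phi, hpp, S.phi_add, aux_phi_neg, S.phi_smul, S.phi_xi, aux_eta_add, aux_eta_neg,
    aux_eta_smul, S.eta_xi, aux_eta_phi, s1, s2]
  module

end ApapR
end

section
/- Let (M,g,φ,ξ,η) be a (2n+1)-dimensional para-Sasaki-like Riemannian manifold with generalized symmetric metric connection ∇̄. Then for every smooth function f, the Laplacians satisfy Δ̄f = Δf − 2nα (ξf), where Δ̄ is the Laplacian with respect to ∇̄ and Δ is the Laplacian of the Levi-Civita connection. -/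
namespace ApapR

variable {R V : Type*} [CommRing R] [Algebra ℝ R] [AddCommGroup V] [Module R V]

/-- the Laplacians with respect to `∇̄` and `∇` satisfy
`Δ̄f = Δf − 2nα(ξf)`.  Here `gf` is the `g`-gradient of `f` and the Laplacian
of `f` with respect to a connection `D` is `div_D (grad f)`. -/
theorem laplace_gsmc_eq (S : ApapR R V) (hS : S.IsParaSasakiLike) (α β : R)
    (f : R) (gf : V) (hgf : ∀ x, S.g gf x = S.act x f) :
    S.divg (S.gsmc α β) gf
      = S.divg S.nab gf - 2 * (S.n : R) * α * S.act S.xi f := by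
  have gsub : ∀ x y z, S.g (x - y) z = S.g x z - S.g y z := by
    intro x y z
    have h : x - y = x + (-1 : R) • y := by rw [neg_one_smul, sub_eq_add_neg]
    rw [h, S.g_addl, S.g_smull]; ring
  have hxi : ∀ i, S.g S.xi (S.e i) = if 0 = i then 1 else 0 := by
    intro i
    rw [← S.e_zero, S.e_orthonormal]
  have g0 : S.g 0 gf = 0 := by
    have h := S.g_smull 0 0 gf
    simpa using h
  have heta : S.eta gf = S.act S.xi f := by rw [S.eta_eq, hgf]
  have hxg : S.g S.xi gf = S.act S.xi f := by rw [S.g_symm, hgf]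
  have key : ∀ i, S.g (S.gsmc α β (S.e i) gf) (S.e i)
      = S.g (S.nab (S.e i) gf) (S.e i)
        + (if 0 = i then α * S.g (S.e i) gf + β * S.g (S.phi (S.e i)) gf else 0)
        - α * S.act S.xi f - β * S.act S.xi f * S.g (S.phi (S.e i)) (S.e i) := by
    intro i
    simp only [gsmc, gsub, S.g_addl, S.g_smull, hxi, S.e_orthonormal, heta]
    split_ifs <;> simp <;> ring
  simp only [divg, key, Finset.sum_sub_distrib, Finset.sum_add_distrib, ← Finset.mul_sum,
    S.trace_phi, Finset.sum_ite_eq, Finset.mem_univ, if_true, S.e_zero, S.phi_xi, g0, hxg,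
    Finset.sum_const, Finset.card_univ, Fintype.card_fin, nsmul_eq_mul]
  push_cast
  ring

end ApapR
end

section
/- Let L be the 3-dimensional Lie group whose Lie algebra has an orthonormal basis {e₀,e₁,e₂} with brackets [e₀,e₁] = −e₂, [e₀,e₂] = −e₁, [e₁,e₂] = 0, endowed with the apapR structure ξ = e₀, φe₀ = 0, φe₁ = e₂, φe₂ = e₁, η(e₀) = 1, and the left-invariant metric g making the basis orthonormal. With the generalized symmetric metric connection ∇̄ (α, β constant), the nonzero connection components are ∇̄_{e₁}e₀ = (1−β)e₂ − αe₁, ∇̄_{e₂}e₀ = (1−β)e₁ − αe₂, ∇̄_{e₁}e₂ = ∇̄_{e₂}e₁ = (β−1)e₀, ∇̄_{e₁}e₁ = ∇̄_{e₂}e₂ = αe₀; the nonzero curvature components (up to standard symmetries) are R̄₀₁₁₀ = −R̄₀₂₀₂ = β−1, R̄₀₁₀₂ = −α, R̄₁₂₁₂ = α² − (β−1)²; the nonzero Ricci components are R̄ic₀₀ = 2(β−1), R̄ic₁₁ = R̄ic₂₂ = β(β−1) − α², R̄ic₁₂ = α; and the scalar curvature is scal̄ = 2(β² − α² − 1). 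-/
/-!
Concrete model of the 3-dimensional Lie group `L` of Example 1: left-invariant
vector fields are identified with `Fin 3 → ℝ` via the orthonormal basis
`{e₀, e₁, e₂}` with brackets `[e₀,e₁] = −e₂`, `[e₀,e₂] = −e₁`, `[e₁,e₂] = 0`,
and the apapR structure `ξ = e₀`, `φe₀ = 0`, `φe₁ = e₂`, `φe₂ = e₁`,
`η(x) = x₀`, `g` the dot product.
-/

/-- The orthonormal basis `e₀, e₁, e₂`. -/
def e3 (i : Fin 3) : Fin 3 → ℝ := fun j => if i = j then 1 else 0

/-- The left-invariant metric (dot product in the orthonormal basis). -/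
def g3 (x y : Fin 3 → ℝ) : ℝ := ∑ i, x i * y i

/-- The Lie bracket determined by `[e₀,e₁] = −e₂`, `[e₀,e₂] = −e₁`,
`[e₁,e₂] = 0`. -/
def br3 (x y : Fin 3 → ℝ) : Fin 3 → ℝ :=
  ![0, -(x 0 * y 2 - x 2 * y 0), -(x 0 * y 1 - x 1 * y 0)]

/-- The paracontact endomorphism: `φe₀ = 0`, `φe₁ = e₂`, `φe₂ = e₁`. -/
def phi3 (x : Fin 3 → ℝ) : Fin 3 → ℝ := ![0, x 2, x 1]

/-- The Reeb vector field `ξ = e₀`. -/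
def xi3 : Fin 3 → ℝ := ![1, 0, 0]

/-- The contact form `η(x) = g(x, ξ) = x₀`. -/
def eta3 (x : Fin 3 → ℝ) : ℝ := x 0

/-- The Levi-Civita connection: nonzero components `∇_{e₁}e₀ = e₂`,
`∇_{e₂}e₀ = e₁`, `∇_{e₁}e₂ = ∇_{e₂}e₁ = −e₀`. -/
def nab3 (x y : Fin 3 → ℝ) : Fin 3 → ℝ :=
  ![-(x 1 * y 2 + x 2 * y 1), x 2 * y 0, x 1 * y 0]

/-- The generalized symmetric metric connection
`∇̄_x y = ∇_x y + α{g(x,y)ξ − η(y)x} + β{g(φx,y)ξ − η(y)φx}`. -/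
def bar3 (α β : ℝ) (x y : Fin 3 → ℝ) : Fin 3 → ℝ :=
  nab3 x y + (α * g3 x y) • xi3 - (α * eta3 y) • x
    + (β * g3 (phi3 x) y) • xi3 - (β * eta3 y) • phi3 x

/-- The curvature tensor of `∇̄`:
`R̄(x,y)z = ∇̄_x∇̄_y z − ∇̄_y∇̄_x z − ∇̄_{[x,y]}z`. -/
def curv3 (α β : ℝ) (x y z : Fin 3 → ℝ) : Fin 3 → ℝ :=
  bar3 α β x (bar3 α β y z) - bar3 α β y (bar3 α β x z) - bar3 α β (br3 x y) z

/-- Curvature components `R̄_{ijkl} = g(R̄(e_i,e_j)e_k, e_l)`. -/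
def Rbar3 (α β : ℝ) (i j k l : Fin 3) : ℝ :=
  g3 (curv3 α β (e3 i) (e3 j) (e3 k)) (e3 l)

/-- The Ricci tensor of `∇̄`: `R̄ic(x,y) = Σ_i g(R̄(e_i,x)y, e_i)`. -/
def Ric3 (α β : ℝ) (x y : Fin 3 → ℝ) : ℝ :=
  ∑ i, g3 (curv3 α β (e3 i) x y) (e3 i)

/-- The scalar curvature of `∇̄`. -/
def scal3 (α β : ℝ) : ℝ := ∑ i, Ric3 α β (e3 i) (e3 i)

/-- The associated metric `g̃(x,y) = g(x,φy) + η(x)η(y)`. -/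
def tg3 (x y : Fin 3 → ℝ) : ℝ := g3 x (phi3 y) + eta3 x * eta3 y

/-- the components of the generalized symmetric metric connection
`∇̄` (full table), its nonzero curvature components (up to the standard
symmetries), its nonzero Ricci components, and the scalar curvature on the
3-dimensional example `L`. -/
theorem example1_components (α β : ℝ) :
    -- connection components
    (bar3 α β (e3 1) (e3 0) = (1 - β) • e3 2 - α • e3 1) ∧
    (bar3 α β (e3 2) (e3 0) = (1 - β) • e3 1 - α • e3 2) ∧
    (bar3 α β (e3 1) (e3 2) = (β - 1) • e3 0) ∧
    (bar3 α β (e3 2) (e3 1) = (β - 1) • e3 0) ∧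
    (bar3 α β (e3 1) (e3 1) = α • e3 0) ∧
    (bar3 α β (e3 2) (e3 2) = α • e3 0) ∧
    (∀ j, bar3 α β (e3 0) (e3 j) = 0) ∧
    -- nonzero curvature components
    (Rbar3 α β 0 1 1 0 = β - 1) ∧
    (Rbar3 α β 0 2 0 2 = -(β - 1)) ∧
    (Rbar3 α β 0 1 0 2 = -α) ∧
    (Rbar3 α β 1 2 1 2 = α ^ 2 - (β - 1) ^ 2) ∧
    -- nonzero Ricci components
    (Ric3 α β (e3 0) (e3 0) = 2 * (β - 1)) ∧
    (Ric3 α β (e3 1) (e3 1) = β * (β - 1) - α ^ 2) ∧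
    (Ric3 α β (e3 2) (e3 2) = β * (β - 1) - α ^ 2) ∧
    (Ric3 α β (e3 1) (e3 2) = α) ∧
    -- scalar curvature
    (scal3 α β = 2 * (β ^ 2 - α ^ 2 - 1)) := by
  have hb : ∀ x y : Fin 3 → ℝ, bar3 α β x y =
      ![-(x 1 * y 2 + x 2 * y 1) + α * (x 0 * y 0 + x 1 * y 1 + x 2 * y 2) - α * y 0 * x 0
          + β * (x 2 * y 1 + x 1 * y 2),
        x 2 * y 0 - α * y 0 * x 1 - β * y 0 * x 2,
        x 1 * y 0 - α * y 0 * x 2 - β * y 0 * x 1] := by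
    intro x y
    ext i
    fin_cases i <;> simp [bar3, nab3, g3, xi3, eta3, phi3, Fin.sum_univ_three, Matrix.vecHead, Matrix.vecTail]
  have e0 : e3 0 = ![1, 0, 0] := by ext i; fin_cases i <;> simp [e3]
  have e1 : e3 1 = ![0, 1, 0] := by ext i; fin_cases i <;> simp [e3]
  have e2 : e3 2 = ![0, 0, 1] := by ext i; fin_cases i <;> simp [e3]
  refine ⟨?_, ?_, ?_, ?_, ?_, ?_, ?_, ?_, ?_, ?_, ?_, ?_, ?_, ?_, ?_, ?_⟩
  case refine_7 =>
    intro j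
    ext i
    fin_cases j <;> fin_cases i <;> simp [hb, e0, e1, e2]
  all_goals first
    | (simp [Rbar3, Ric3, scal3, curv3, hb, g3, br3, e0, e1, e2, Fin.sum_univ_three]; done)
    | (simp [Rbar3, Ric3, scal3, curv3, hb, g3, br3, e0, e1, e2, Fin.sum_univ_three]; ring)
    | (ext i; fin_cases i <;> simp [hb, e0, e1, e2] <;> ring)
end

section
/- Let G be the 5-dimensional Lie group whose Lie algebra has an orthonormal basis {e₀,…,e₄} with brackets [e₀,e₁] = pe₂ − e₃ + qe₄, [e₀,e₂] = −pe₁ − qe₃ − e₄, [e₀,e₃] = −e₁ + qe₂ + pe₄, [e₀,e₄] = −qe₁ − e₂ − pe₃ (p,q ∈ ℝ, all other brackets zero), endowed with the apapR structure ξ = e₀, φe₁ = e₃, φe₂ = e₄, φe₃ = e₁, φe₄ = e₂, and the left-invariant metric g making the basis orthonormal. With respect to the generalized symmetric metric connection ∇̄ (α, β constant): (i) G is para-Einstein-like, R̄ic = λg + μg̃ + ν η⊗η, with λ = β² − β − 3α², μ = −2αβ + 3α, ν = 3α² + 2αβ − 3α + 5β − β² − 4; and (ii) G admits a para-Ricci-like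 soliton with potential ξ with respect to ∇̄, i.e. (1/2)L̄_ξ g + R̄ic + λ'g + μ'g̃ + ν' η⊗η = 0, with λ' = 3α² + α − β² + β, μ' = 2αβ + β − 3α − 1, ν' = β² − 3α² − 2αβ − 6β + 2α + 5. -/
/-!
Concrete model of the 5-dimensional Lie group `G` of Example 2: left-invariant
vector fields are identified with `Fin 5 → ℝ` via the orthonormal basis
`{e₀,…,e₄}` with brackets
`[e₀,e₁] = pe₂ − e₃ + qe₄`, `[e₀,e₂] = −pe₁ − qe₃ − e₄`,
`[e₀,e₃] = −e₁ + qe₂ + pe₄`, `[e₀,e₄] = −qe₁ − e₂ − pe₃` (others zero),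
and the apapR structure `ξ = e₀`, `φe₁ = e₃`, `φe₂ = e₄`, `φe₃ = e₁`,
`φe₄ = e₂`, `η(x) = x₀`, `g` the dot product.
-/

/-- The orthonormal basis `e₀, …, e₄`. -/
def e5 (i : Fin 5) : Fin 5 → ℝ := fun j => if i = j then 1 else 0

/-- The left-invariant metric (dot product in the orthonormal basis). -/
def g5 (x y : Fin 5 → ℝ) : ℝ := ∑ i, x i * y i

/-- The Lie bracket determined by the structure constants above. -/
def br5 (p q : ℝ) (x y : Fin 5 → ℝ) : Fin 5 → ℝ :=
  ![0,
    -p * (x 0 * y 2 - x 2 * y 0) - (x 0 * y 3 - x 3 * y 0)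
      - q * (x 0 * y 4 - x 4 * y 0),
    p * (x 0 * y 1 - x 1 * y 0) + q * (x 0 * y 3 - x 3 * y 0)
      - (x 0 * y 4 - x 4 * y 0),
    -(x 0 * y 1 - x 1 * y 0) - q * (x 0 * y 2 - x 2 * y 0)
      - p * (x 0 * y 4 - x 4 * y 0),
    q * (x 0 * y 1 - x 1 * y 0) - (x 0 * y 2 - x 2 * y 0)
      + p * (x 0 * y 3 - x 3 * y 0)]

/-- The paracontact endomorphism: `φe₀ = 0`, `φe₁ = e₃`, `φe₂ = e₄`,
`φe₃ = e₁`, `φe₄ = e₂`. -/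
def phi5 (x : Fin 5 → ℝ) : Fin 5 → ℝ := ![0, x 3, x 4, x 1, x 2]

/-- The Reeb vector field `ξ = e₀`. -/
def xi5 : Fin 5 → ℝ := ![1, 0, 0, 0, 0]

/-- The contact form `η(x) = g(x, ξ) = x₀`. -/
def eta5 (x : Fin 5 → ℝ) : ℝ := x 0

/-- The Levi-Civita connection: nonzero components
`∇_{e₀}e₁ = pe₂ + qe₄`, `∇_{e₁}e₀ = e₃`, `∇_{e₀}e₂ = −pe₁ − qe₃`,
`∇_{e₂}e₀ = e₄`, `∇_{e₀}e₃ = qe₂ + pe₄`, `∇_{e₃}e₀ = e₁`,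
`∇_{e₀}e₄ = −qe₁ − pe₃`, `∇_{e₄}e₀ = e₂`,
`∇_{e₁}e₃ = ∇_{e₂}e₄ = ∇_{e₃}e₁ = ∇_{e₄}e₂ = −e₀`. -/
def nab5 (p q : ℝ) (x y : Fin 5 → ℝ) : Fin 5 → ℝ :=
  ![-(x 1 * y 3 + x 2 * y 4 + x 3 * y 1 + x 4 * y 2),
    x 0 * (-p * y 2 - q * y 4) + y 0 * x 3,
    x 0 * (p * y 1 + q * y 3) + y 0 * x 4,
    x 0 * (-q * y 2 - p * y 4) + y 0 * x 1,
    x 0 * (q * y 1 + p * y 3) + y 0 * x 2]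

/-- The generalized symmetric metric connection
`∇̄_x y = ∇_x y + α{g(x,y)ξ − η(y)x} + β{g(φx,y)ξ − η(y)φx}`. -/
def bar5 (p q α β : ℝ) (x y : Fin 5 → ℝ) : Fin 5 → ℝ :=
  nab5 p q x y + (α * g5 x y) • xi5 - (α * eta5 y) • x
    + (β * g5 (phi5 x) y) • xi5 - (β * eta5 y) • phi5 x

/-- The curvature tensor of `∇̄`:
`R̄(x,y)z = ∇̄_x∇̄_y z − ∇̄_y∇̄_x z − ∇̄_{[x,y]}z`. -/
def curv5 (p q α β : ℝ) (x y z : Fin 5 → ℝ) : Fin 5 → ℝ :=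
  bar5 p q α β x (bar5 p q α β y z) - bar5 p q α β y (bar5 p q α β x z)
    - bar5 p q α β (br5 p q x y) z

/-- The Ricci tensor of `∇̄`: `R̄ic(x,y) = Σ_{i=0}^{4} g(R̄(e_i,x)y, e_i)`. -/
def Ric5 (p q α β : ℝ) (x y : Fin 5 → ℝ) : ℝ :=
  ∑ i, g5 (curv5 p q α β (e5 i) x y) (e5 i)

/-- The scalar curvature of `∇̄`. -/
def scal5 (p q α β : ℝ) : ℝ := ∑ i, Ric5 p q α β (e5 i) (e5 i)

/-- The associated metric `g̃(x,y) = g(x,φy) + η(x)η(y)`. -/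
def tg5 (x y : Fin 5 → ℝ) : ℝ := g5 x (phi5 y) + eta5 x * eta5 y

theorem bar5_eq (p q α β : ℝ) (x y : Fin 5 → ℝ) : bar5 p q α β x y =
    ![-(x 1 * y 3 + x 2 * y 4 + x 3 * y 1 + x 4 * y 2)
        + α * (x 1 * y 1 + x 2 * y 2 + x 3 * y 3 + x 4 * y 4)
        + β * (x 3 * y 1 + x 4 * y 2 + x 1 * y 3 + x 2 * y 4),
      x 0 * (-p * y 2 - q * y 4) + y 0 * x 3 - α * y 0 * x 1 - β * y 0 * x 3,
      x 0 * (p * y 1 + q * y 3) + y 0 * x 4 - α * y 0 * x 2 - β * y 0 * x 4,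
      x 0 * (-q * y 2 - p * y 4) + y 0 * x 1 - α * y 0 * x 3 - β * y 0 * x 1,
      x 0 * (q * y 1 + p * y 3) + y 0 * x 2 - α * y 0 * x 4 - β * y 0 * x 2] := by
  funext i
  simp only [bar5, Pi.add_apply, Pi.sub_apply, Pi.smul_apply, smul_eq_mul]
  fin_cases i <;>
    simp [nab5, g5, phi5, xi5, eta5, Fin.sum_univ_five] <;> ring

theorem g5_e5 (v : Fin 5 → ℝ) (i : Fin 5) : g5 v (e5 i) = v i := by
  simp [g5, e5]

theorem Ric5_eq (p q α β : ℝ) (x y : Fin 5 → ℝ) : Ric5 p q α β x y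
        = (β ^ 2 - β - 3 * α ^ 2) * g5 x y
          + (-2 * α * β + 3 * α) * tg5 x y
          + (3 * α ^ 2 + 2 * α * β - 3 * α + 5 * β - β ^ 2 - 4)
              * eta5 x * eta5 y := by
  simp only [Ric5, g5_e5, curv5, bar5_eq, Fin.sum_univ_five]
  simp [br5, e5, tg5, g5, phi5, eta5, Fin.sum_univ_five]
  ring

/-- with respect to the generalized symmetric metric connection,
the 5-dimensional example `G` is (i) para-Einstein-like with constants
`λ = β² − β − 3α²`, `μ = −2αβ + 3α`, `ν = 3α² + 2αβ − 3α + 5β − β² − 4` and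
(ii) admits a para-Ricci-like soliton with potential `ξ` with constants
`λ' = 3α² + α − β² + β`, `μ' = 2αβ + β − 3α − 1`,
`ν' = β² − 3α² − 2αβ − 6β + 2α + 5`. -/
theorem example2_einstein_and_soliton (p q α β : ℝ) :
    (∀ x y : Fin 5 → ℝ, Ric5 p q α β x y
        = (β ^ 2 - β - 3 * α ^ 2) * g5 x y
          + (-2 * α * β + 3 * α) * tg5 x y
          + (3 * α ^ 2 + 2 * α * β - 3 * α + 5 * β - β ^ 2 - 4)
              * eta5 x * eta5 y) ∧
    (∀ x y : Fin 5 → ℝ,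
        (1 / 2 : ℝ) * (g5 (bar5 p q α β x xi5) y + g5 x (bar5 p q α β y xi5))
          + Ric5 p q α β x y
          + (3 * α ^ 2 + α - β ^ 2 + β) * g5 x y
          + (2 * α * β + β - 3 * α - 1) * tg5 x y
          + (β ^ 2 - 3 * α ^ 2 - 2 * α * β - 6 * β + 2 * α + 5)
              * eta5 x * eta5 y = 0) := by
  refine ⟨Ric5_eq p q α β, fun x y => ?_⟩
  rw [Ric5_eq, bar5_eq, bar5_eq]
  simp [tg5, g5, phi5, eta5, xi5, Fin.sum_univ_five]
  ring
end
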